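/- Let γ ≥ 1 and let A ∈ ℝ^{m×n} be partitioned in blocks A = [[A11, A12],[A21, A22]] with A11 ∈ ℝ^{k×k} a γ-local maximum volume k×k submatrix of A, and let A_k = [[A11, A12],[A21, A21·A11⁻¹·A12]] be the rank-k approximant of the partial LU factorization. Then: (a) ‖A11⁻¹A12‖_max ≤ γ and ‖A21A11⁻¹‖_max ≤ γ; (b) for 1 ≤ j ≤ k, (1/(1 + 5γ²k√(mn)))·σ_j(A) ≤ σ_j(A_k) ≤ (1 + 5γ²k√(mn))·σ_j(A); and (c) for 1 ≤ j ≤ min(m,n) − k, σ_{k+j}(A) ≤ σ_j(A − A_k) ≤ (1 + 5γ²k√(mn))·σ_{k+j}(A). -/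

import Mathlib

open Matrix

/-- The spectral norm (`‖·‖₂`, largest singular value) of a real matrix. -/
noncomputable def specNorm {m n : Type*} [Fintype m] [Fintype n] [DecidableEq n]
    (A : Matrix m n ℝ) : ℝ :=
  ‖LinearMap.toContinuousLinearMap (Matrix.toEuclideanLin A)‖

/-- `sval A j` is the `j`-th largest singular value of `A` (1-indexed), characterized as the
distance, in the spectral norm, from `A` to the set of matrices of rank `< j`. -/
noncomputable def sval {m n : Type*} [Fintype m] [Fintype n] [DecidableEq n]
    (A : Matrix m n ℝ) (j : ℕ) : ℝ :=
  sInf {x : ℝ | ∃ B : Matrix m n ℝ, B.rank < j ∧ x = specNorm (A - B)}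

/-- The volume of a matrix: the product of its singular values. -/
noncomputable def vol {m n : Type*} [Fintype m] [Fintype n] [DecidableEq n]
    (A : Matrix m n ℝ) : ℝ :=
  ∏ j ∈ Finset.Icc 1 (min (Fintype.card m) (Fintype.card n)), sval A j

/-- `DiffOne b r` : `r` is an injective selection of indices whose image (index set)
differs from the index set selected by `b` in at most one element. -/
def DiffOne {ι α : Type*} [Fintype ι] [DecidableEq α] (b r : ι → α) : Prop :=
  Function.Injective r ∧ (Finset.univ.image r \ Finset.univ.image b).card ≤ 1

/-!
Singular values are distances to low rank, so `σ_j` can be bounded by exhibiting competitors.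
Write `S` for the Schur complement of `A₁₁`, so that `A - A_k` is `S` padded with zeros.

For (b), `σ_j` changes by at most `‖S‖` between `A` and `A_k`, and since both matrices contain
`A₁₁`, their `σ_j` with `j ≤ k` is at least `‖A₁₁⁻¹‖⁻¹`. The relative error is thus at most
`‖A₁₁⁻¹‖ ‖S‖`.

For (c), let `B` have rank less than `k + j`. If `‖A₁₁⁻¹‖ ‖A - B‖ ≥ 1`, then
`‖S‖ ≤ ‖A₁₁⁻¹‖ ‖S‖ ‖A - B‖`. Otherwise `B₁₁` is invertible, so the Schur complement of `B` has rank
less than `j`, and `S` differs from it by `L_B (A - B) R_A`, where `L_B = [-B₂₁B₁₁⁻¹  1]` and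
`R_A = [-A₁₁⁻¹A₁₂; 1]` are the elimination factors; a perturbation argument replaces `L_B` by `L_A`.

The volume enters only through Cramer's rule. Exchanging one row or column of `A₁₁` multiplies its
determinant by an entry `x` of `A₂₁A₁₁⁻¹` or `y` of `A₁₁⁻¹A₁₂`; exchanging both multiplies it by
`xy + S_{ij} (A₁₁⁻¹)_{ba}`. Hence `|x|, |y| ≤ γ` and `|S_{ij} (A₁₁⁻¹)_{ba}| ≤ γ + γ² ≤ 2γ²`, which
bounds `‖A₁₁⁻¹‖ ‖S‖` and the elimination factors.
-/

section SingularValues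

open Module

variable {𝕜 E F : Type*} [RCLike 𝕜] [NormedAddCommGroup E] [InnerProductSpace 𝕜 E]
  [FiniteDimensional 𝕜 E] [NormedAddCommGroup F] [InnerProductSpace 𝕜 F] [FiniteDimensional 𝕜 F]

/-- An orthonormal basis of right singular vectors of `T`, ordered so that the `i`-th vector belongs
to `T.singularValues i`. -/
noncomputable def rightSingularBasis (T : E →ₗ[𝕜] F) :
    OrthonormalBasis (Fin (finrank 𝕜 E)) 𝕜 E :=
  T.isSymmetric_adjoint_comp_self.eigenvectorBasis rfl

/-- The span of the right singular vectors of `T` that belong to its `i` largest singular values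
(all of `E` when `finrank 𝕜 E ≤ i`). -/
noncomputable def leadingSingularSpace (T : E →ₗ[𝕜] F) (i : ℕ) : Submodule 𝕜 E :=
  Submodule.span 𝕜 (rightSingularBasis T '' {a | (a : ℕ) < i})

theorem finrank_leadingSingularSpace (T : E →ₗ[𝕜] F) (i : ℕ) :
    finrank 𝕜 (leadingSingularSpace T i) = min i (finrank 𝕜 E) := by
  have hli : LinearIndependent 𝕜
      (fun a : {a : Fin (finrank 𝕜 E) // (a : ℕ) < i} ↦ rightSingularBasis T a) :=
    (rightSingularBasis T).orthonormal.linearIndependent.comp _ Subtype.val_injective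
  have hspan := finrank_span_eq_card hli
  rw [Set.range_comp' (rightSingularBasis T) Subtype.val, Subtype.range_coe_subtype] at hspan
  rw [leadingSingularSpace, hspan, Fintype.card_subtype, Fin.card_filter_val_lt, min_comm]

theorem norm_sq_apply_eq_sum (T : E →ₗ[𝕜] F) (x : E) :
    ‖T x‖ ^ 2 =
      ∑ a : Fin (finrank 𝕜 E), T.singularValues a ^ 2 * ‖(rightSingularBasis T).repr x a‖ ^ 2 := by
  have hinner : inner 𝕜 (LinearMap.adjoint T (T x)) x = ((‖T x‖ ^ 2 : ℝ) : 𝕜) := by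
    rw [LinearMap.adjoint_inner_left, inner_self_eq_norm_sq_to_K]; norm_cast
  rw [← RCLike.ofReal_inj (K := 𝕜), ← hinner,
    ← (rightSingularBasis T).repr.inner_map_map, PiLp.inner_apply, RCLike.ofReal_sum]
  refine Finset.sum_congr rfl fun a _ ↦ ?_
  have happly := T.isSymmetric_adjoint_comp_self.eigenvectorBasis_apply_self_apply rfl x a
  rw [← T.sq_singularValues_fin] at happly
  rw [rightSingularBasis, ← LinearMap.comp_apply, happly]
  rw [RCLike.inner_apply, map_mul, mul_left_comm, RCLike.mul_conj]
  simp

theorem repr_eq_zero_of_mem_leadingSingularSpace {T : E →ₗ[𝕜] F} {i : ℕ} {x : E}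
    (hx : x ∈ leadingSingularSpace T i) {a : Fin (finrank 𝕜 E)} (ha : i ≤ a) :
    (rightSingularBasis T).repr x a = 0 := by
  rw [OrthonormalBasis.repr_apply_apply]
  refine Submodule.mem_orthogonal_singleton_iff_inner_right.mp
    (Submodule.span_le.mpr ?_ hx)
  rintro _ ⟨b, hb, rfl⟩
  exact Submodule.mem_orthogonal_singleton_iff_inner_right.mpr
    ((rightSingularBasis T).orthonormal.2 fun h ↦ (h ▸ ha).not_gt hb)

theorem repr_eq_zero_of_mem_orthogonal_leadingSingularSpace {T : E →ₗ[𝕜] F} {i : ℕ} {x : E}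
    (hx : x ∈ (leadingSingularSpace T i)ᗮ) {a : Fin (finrank 𝕜 E)} (ha : (a : ℕ) < i) :
    (rightSingularBasis T).repr x a = 0 := by
  rw [OrthonormalBasis.repr_apply_apply]
  exact hx _ (Submodule.subset_span ⟨a, ha, rfl⟩)

theorem singularValues_mul_norm_le {T : E →ₗ[𝕜] F} {i : ℕ} {x : E}
    (hx : x ∈ leadingSingularSpace T (i + 1)) : T.singularValues i * ‖x‖ ≤ ‖T x‖ := by
  refine (sq_le_sq₀ (mul_nonneg (T.singularValues_nonneg i) (norm_nonneg x)) (norm_nonneg _)).mp ?_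
  rw [mul_pow, norm_sq_apply_eq_sum, ← (rightSingularBasis T).repr.norm_map x,
    EuclideanSpace.norm_sq_eq, Finset.mul_sum]
  refine Finset.sum_le_sum fun a _ ↦ ?_
  rcases lt_or_ge (a : ℕ) (i + 1) with ha | ha
  · gcongr
    · exact T.singularValues_nonneg i
    · exact T.singularValues_antitone (Nat.lt_succ_iff.mp ha)
  · simp [repr_eq_zero_of_mem_leadingSingularSpace hx ha]

theorem norm_apply_le_singularValues_mul {T : E →ₗ[𝕜] F} {i : ℕ} {x : E}
    (hx : x ∈ (leadingSingularSpace T i)ᗮ) : ‖T x‖ ≤ T.singularValues i * ‖x‖ := by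
  refine (sq_le_sq₀ (norm_nonneg _) (mul_nonneg (T.singularValues_nonneg i) (norm_nonneg x))).mp ?_
  rw [mul_pow, norm_sq_apply_eq_sum, ← (rightSingularBasis T).repr.norm_map x,
    EuclideanSpace.norm_sq_eq, Finset.mul_sum]
  refine Finset.sum_le_sum fun a _ ↦ ?_
  rcases lt_or_ge (a : ℕ) i with ha | ha
  · simp [repr_eq_zero_of_mem_orthogonal_leadingSingularSpace hx ha]
  · gcongr
    · exact T.singularValues_nonneg a
    · exact T.singularValues_antitone ha

theorem singularValues_le_norm_sub {T S : E →ₗ[𝕜] F} {i : ℕ}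
    (hS : finrank 𝕜 S.range ≤ i) :
    T.singularValues i ≤ ‖LinearMap.toContinuousLinearMap (T - S)‖ := by
  rcases le_or_gt (finrank 𝕜 E) i with hi | hi
  · rw [T.singularValues_of_finrank_le hi]
    exact norm_nonneg _
  have hmeet : ¬Disjoint S.ker (leadingSingularSpace T (i + 1)) := fun hdisj ↦ by
    have hdim := Submodule.finrank_add_finrank_le_of_disjoint hdisj
    rw [finrank_leadingSingularSpace] at hdim
    have := S.finrank_range_add_finrank_ker
    omega
  obtain ⟨x, ⟨hxS, hxT⟩, hx0⟩ := Submodule.exists_mem_ne_zero_of_ne_bot (mt disjoint_iff.mpr hmeet)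
  refine le_of_mul_le_mul_right ?_ (norm_pos_iff.mpr hx0)
  calc T.singularValues i * ‖x‖ ≤ ‖T x‖ := singularValues_mul_norm_le hxT
    _ = ‖LinearMap.toContinuousLinearMap (T - S) x‖ := by simp [LinearMap.mem_ker.mp hxS]
    _ ≤ _ := ContinuousLinearMap.le_opNorm _ x

theorem exists_finrank_range_le_norm_sub_le_singularValues (T : E →ₗ[𝕜] F) (i : ℕ) :
    ∃ S : E →ₗ[𝕜] F, finrank 𝕜 S.range ≤ i ∧
      ‖LinearMap.toContinuousLinearMap (T - S)‖ ≤ T.singularValues i := by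
  set K := leadingSingularSpace T i with hK
  refine ⟨T ∘ₗ K.starProjection, ?_, ContinuousLinearMap.opNorm_le_bound _
    (T.singularValues_nonneg i) fun x ↦ ?_⟩
  · rw [LinearMap.range_comp]
    calc _ ≤ finrank 𝕜 (K.starProjection : E →ₗ[𝕜] E).range := Submodule.finrank_map_le _ _
      _ = finrank 𝕜 K := by rw [Submodule.range_starProjection]
      _ ≤ i := by rw [hK, finrank_leadingSingularSpace]; exact min_le_left _ _
  · calc _ = ‖T (Kᗮ.starProjection x)‖ := by
          simp [Submodule.starProjection_orthogonal_val]
      _ ≤ T.singularValues i * ‖Kᗮ.starProjection x‖ :=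
        norm_apply_le_singularValues_mul (Submodule.starProjection_apply_mem _ x)
      _ ≤ T.singularValues i * ‖x‖ := by
        gcongr
        · exact T.singularValues_nonneg i
        · exact Submodule.norm_starProjection_apply_le _ x

end SingularValues

theorem submatrix_eq_mul_mul {R m n p q : Type*} [Semiring R] [Fintype m] [Fintype n]
    [DecidableEq m] [DecidableEq n] (A : Matrix m n R) (f : p → m) (g : q → n) :
    A.submatrix f g =
      (1 : Matrix m m R).submatrix f id * A * (1 : Matrix n n R).submatrix id g := by
  ext
  simp [mul_apply, one_apply]

theorem rank_add_le {R m n : Type*} [Field R] [Fintype n] (A B : Matrix m n R) :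
    (A + B).rank ≤ A.rank + B.rank := by
  rw [rank, rank, rank, mulVecLin_add]
  exact (Submodule.finrank_mono (LinearMap.range_add_le _ _)).trans
    (Submodule.finrank_add_le_finrank_add_finrank _ _)

section SpectralNorm

open scoped Matrix.Norms.L2Operator

variable {𝕜 m n p q : Type*} [RCLike 𝕜] [Fintype m] [Fintype n] [Fintype p] [Fintype q]
  [DecidableEq n] [DecidableEq q]

theorem norm_one_le : ‖(1 : Matrix n n 𝕜)‖ ≤ 1 := by
  rw [← diagonal_one, l2_opNorm_diagonal]
  exact (pi_norm_le_iff_of_nonneg zero_le_one).mpr fun _ ↦ by simp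

theorem norm_one_submatrix_id_le {g : q → n} (hg : g.Injective) :
    ‖(1 : Matrix n n 𝕜).submatrix id g‖ ≤ 1 := by
  have hisom : ((1 : Matrix n n 𝕜).submatrix id g)ᴴ * (1 : Matrix n n 𝕜).submatrix id g = 1 := by
    rw [conjTranspose_submatrix, conjTranspose_one, ← submatrix_mul _ _ _ _ _ Function.bijective_id,
      Matrix.one_mul, submatrix_one _ hg]
  rw [← abs_norm, abs_le_one_iff_mul_self_le_one, ← l2_opNorm_conjTranspose_mul_self, hisom]
  exact norm_one_le

theorem norm_one_submatrix_le [DecidableEq m] {f : p → m} (hf : f.Injective) :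
    ‖(1 : Matrix m m 𝕜).submatrix f id‖ ≤ 1 := by
  classical
  rw [← l2_opNorm_conjTranspose, conjTranspose_submatrix, conjTranspose_one]
  exact norm_one_submatrix_id_le hf

theorem norm_submatrix_le (A : Matrix m n 𝕜) {f : p → m} {g : q → n}
    (hf : f.Injective) (hg : g.Injective) : ‖A.submatrix f g‖ ≤ ‖A‖ := by
  classical
  grw [submatrix_eq_mul_mul, l2_opNorm_mul, l2_opNorm_mul, norm_one_submatrix_le hf,
    norm_one_submatrix_id_le hg, one_mul, mul_one]

theorem one_le_norm_inv_mul_norm_sub {A B : Matrix n n 𝕜} (hA : IsUnit A) (hB : ¬IsUnit B) :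
    1 ≤ ‖A⁻¹‖ * ‖A - B‖ := by
  by_contra! hlt
  have hunit : IsUnit (1 - A⁻¹ * (A - B)) :=
    isUnit_one_sub_of_norm_lt_one ((l2_opNorm_mul _ _).trans_lt hlt)
  rw [Matrix.mul_sub, nonsing_inv_mul _ (A.isUnit_iff_isUnit_det.mp hA), sub_sub_cancel] at hunit
  exact hB (isUnit_of_mul_isUnit_right hunit)

theorem norm_le_sqrt_card_mul {M : Matrix m n 𝕜} {c : ℝ} (hc : 0 ≤ c) (h : ∀ i j, ‖M i j‖ ≤ c) :
    ‖M‖ ≤ √(Fintype.card m * Fintype.card n) * c := by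
  refine ContinuousLinearMap.opNorm_le_bound _ (by positivity) fun x ↦ ?_
  refine (sq_le_sq₀ (norm_nonneg _) (by positivity)).mp ?_
  have hrow (i : m) : ‖(M *ᵥ x) i‖ ^ 2 ≤ Fintype.card n * c ^ 2 * ‖x‖ ^ 2 := by
    calc ‖(M *ᵥ x) i‖ ^ 2 ≤ (∑ j, ‖M i j‖ * ‖x j‖) ^ 2 := by
          gcongr
          exact norm_sum_le_of_le _ fun j _ ↦ norm_mul_le _ _
      _ ≤ (∑ j, ‖M i j‖ ^ 2) * ∑ j, ‖x j‖ ^ 2 := Finset.sum_mul_sq_le_sq_mul_sq ..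
      _ ≤ (∑ _j : n, c ^ 2) * ∑ j, ‖x j‖ ^ 2 := by
        gcongr
        exact h i _
      _ = _ := by simp [EuclideanSpace.norm_sq_eq]
  calc _ = ∑ i, ‖(M *ᵥ x) i‖ ^ 2 := by simp [EuclideanSpace.norm_sq_eq]
    _ ≤ ∑ _i : m, Fintype.card n * c ^ 2 * ‖x‖ ^ 2 := Finset.sum_le_sum fun i _ ↦ hrow i
    _ = (√(Fintype.card m * Fintype.card n) * c * ‖x‖) ^ 2 := by
      rw [mul_pow, mul_pow, Real.sq_sqrt (by positivity)]
      simp [mul_assoc]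

theorem norm_mul_norm_le_of_norm_mul_le {M : Matrix m n 𝕜} {N : Matrix p q 𝕜} {c : ℝ}
    (hc : 0 ≤ c) (h : ∀ i j a b, ‖M i j * N a b‖ ≤ c) :
    ‖M‖ * ‖N‖ ≤ √(Fintype.card m * Fintype.card n) * √(Fintype.card p * Fintype.card q) * c := by
  have hM (a : p) (b : q) : ‖((‖M‖ : 𝕜) • N) a b‖ ≤ √(Fintype.card m * Fintype.card n) * c := by
    rw [Matrix.smul_apply, smul_eq_mul, norm_mul, RCLike.norm_ofReal, abs_norm, mul_comm,
      ← norm_smul]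
    exact norm_le_sqrt_card_mul hc fun i j ↦ by simpa [mul_comm] using h i j a b
  calc ‖M‖ * ‖N‖ = ‖(‖M‖ : 𝕜) • N‖ := by rw [norm_smul, RCLike.norm_ofReal, abs_norm]
    _ ≤ √(Fintype.card p * Fintype.card q) * (√(Fintype.card m * Fintype.card n) * c) :=
      norm_le_sqrt_card_mul (by positivity) hM
    _ = _ := by ring

theorem norm_fromRows_sq_le (M : Matrix m n 𝕜) (N : Matrix p n 𝕜) :
    ‖fromRows M N‖ ^ 2 ≤ ‖M‖ ^ 2 + ‖N‖ ^ 2 := by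
  simp only [sq, ← l2_opNorm_conjTranspose_mul_self]
  rw [conjTranspose_fromRows_eq_fromCols_conjTranspose, fromCols_mul_fromRows]
  exact norm_add_le _ _

theorem norm_fromCols_sq_le (M : Matrix m n 𝕜) (N : Matrix m q 𝕜) :
    ‖fromCols M N‖ ^ 2 ≤ ‖M‖ ^ 2 + ‖N‖ ^ 2 := by
  classical
  rw [← l2_opNorm_conjTranspose, conjTranspose_fromCols_eq_fromRows_conjTranspose,
    ← l2_opNorm_conjTranspose M, ← l2_opNorm_conjTranspose N]
  exact norm_fromRows_sq_le _ _

theorem norm_fromBlocks_zero_le (M : Matrix m n 𝕜) :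
    ‖(fromBlocks M 0 0 0 : Matrix (m ⊕ p) (n ⊕ q) 𝕜)‖ ≤ ‖M‖ := by
  classical
  refine (sq_le_sq₀ (norm_nonneg _) (norm_nonneg _)).mp ?_
  calc _ ≤ ‖fromCols M (0 : Matrix m q 𝕜)‖ ^ 2 + ‖(0 : Matrix p (n ⊕ q) 𝕜)‖ ^ 2 := by
        rw [← fromRows_fromCols_eq_fromBlocks, fromCols_zero]
        exact norm_fromRows_sq_le _ _
    _ ≤ ‖M‖ ^ 2 + ‖(0 : Matrix m q 𝕜)‖ ^ 2 + ‖(0 : Matrix p (n ⊕ q) 𝕜)‖ ^ 2 := by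
        grw [norm_fromCols_sq_le]
    _ = ‖M‖ ^ 2 := by simp

end SpectralNorm

section Sval

open scoped Matrix.Norms.L2Operator

variable {m n p q : Type*} [Fintype m] [Fintype n] [Fintype p] [Fintype q]
  [DecidableEq n] [DecidableEq q]

theorem specNorm_eq_norm (A : Matrix m n ℝ) : specNorm A = ‖A‖ := rfl

theorem sval_eq_iInf (A : Matrix m n ℝ) (j : ℕ) :
    sval A j = ⨅ B : {B : Matrix m n ℝ // B.rank < j}, ‖A - B‖ := by
  rw [sval, iInf]
  congr 1
  ext x
  simp [specNorm_eq_norm, eq_comm]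

theorem sval_le_norm_sub (A : Matrix m n ℝ) {B : Matrix m n ℝ} {j : ℕ} (hB : B.rank < j) :
    sval A j ≤ ‖A - B‖ := by
  rw [sval_eq_iInf]
  exact ciInf_le (f := fun B : {B : Matrix m n ℝ // B.rank < j} ↦ ‖A - B‖)
    ⟨0, Set.forall_mem_range.mpr fun _ ↦ norm_nonneg _⟩ ⟨B, hB⟩

theorem sval_nonneg (A : Matrix m n ℝ) (j : ℕ) : 0 ≤ sval A j := by
  rw [sval_eq_iInf]
  exact Real.iInf_nonneg fun _ ↦ norm_nonneg _

theorem le_mul_sval {A : Matrix m n ℝ} {j : ℕ} (hj : 0 < j) {c x : ℝ} (hc : 0 ≤ c)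
    (h : ∀ B : Matrix m n ℝ, B.rank < j → x ≤ c * ‖A - B‖) : x ≤ c * sval A j := by
  have : Nonempty {B : Matrix m n ℝ // B.rank < j} := ⟨⟨0, by rwa [rank_zero]⟩⟩
  rw [sval_eq_iInf, Real.mul_iInf_of_nonneg hc]
  exact le_ciInf fun B ↦ h B B.2

theorem sval_le_norm (A : Matrix m n ℝ) {j : ℕ} (hj : 0 < j) : sval A j ≤ ‖A‖ := by
  simpa using sval_le_norm_sub A (B := 0) (by rwa [rank_zero])

theorem sval_succ_eq_singularValues (A : Matrix m n ℝ) (i : ℕ) :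
    sval A (i + 1) = (toEuclideanLin A).singularValues i := by
  have rank_eq (B : Matrix m n ℝ) : B.rank = Module.finrank ℝ (toEuclideanLin B).range := by
    rw [toEuclideanLin_eq_toLin_orthonormal, ← rank_eq_finrank_range_toLin]
  apply le_antisymm
  · obtain ⟨S, hrank, hS⟩ :=
      exists_finrank_range_le_norm_sub_le_singularValues (toEuclideanLin A) i
    obtain ⟨B, rfl⟩ := toEuclideanLin.surjective S
    refine (sval_le_norm_sub A (Nat.lt_succ_of_le ((rank_eq B).trans_le hrank))).trans ?_
    rwa [← map_sub] at hS
  · rw [← one_mul (sval A _)]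
    refine le_mul_sval i.succ_pos zero_le_one fun B hB ↦ ?_
    rw [one_mul, ← specNorm_eq_norm, specNorm, map_sub]
    exact singularValues_le_norm_sub (rank_eq B ▸ Nat.le_of_lt_succ hB)

theorem vol_eq_abs_det (A : Matrix n n ℝ) : vol A = |A.det| := by
  calc vol A = ∏ i ∈ Finset.range (Fintype.card n), (toEuclideanLin A).singularValues i := by
        rw [vol, min_self, ← Finset.Ico_add_one_right_eq_Icc, Finset.prod_Ico_eq_prod_range,
          add_tsub_cancel_right]
        simp only [add_comm 1, sval_succ_eq_singularValues]
    _ = |(toEuclideanLin A).det| := by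
        rw [← LinearMap.normDet_eq_abs_det, LinearMap.normDet_eq_prod_singularValues,
          finrank_euclideanSpace]
    _ = |A.det| := by rw [toEuclideanLin_eq_toLin_orthonormal, LinearMap.det_toLin]

theorem sval_mul_mul_le (P : Matrix p m ℝ) (M : Matrix m n ℝ) (Q : Matrix n q ℝ) [DecidableEq m]
    {j : ℕ} (hj : 0 < j) : sval (P * M * Q) j ≤ ‖P‖ * ‖Q‖ * sval M j := by
  refine le_mul_sval hj (by positivity) fun B hB ↦ ?_
  have hrank : (P * B * Q).rank < j :=
    ((rank_mul_le_left _ _).trans (rank_mul_le_right _ _)).trans_lt hB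
  calc sval (P * M * Q) j ≤ ‖P * M * Q - P * B * Q‖ := sval_le_norm_sub _ hrank
    _ = ‖P * (M - B) * Q‖ := by rw [Matrix.mul_sub, Matrix.sub_mul]
    _ ≤ ‖P‖ * ‖M - B‖ * ‖Q‖ := by grw [l2_opNorm_mul, l2_opNorm_mul]
    _ = ‖P‖ * ‖Q‖ * ‖M - B‖ := by ring

theorem sval_le_sval_add_norm_sub (A B : Matrix m n ℝ) {j : ℕ} (hj : 0 < j) :
    sval A j ≤ sval B j + ‖A - B‖ := by
  rw [← sub_le_iff_le_add, ← one_mul (sval B j)]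
  refine le_mul_sval hj zero_le_one fun D hD ↦ ?_
  rw [one_mul, sub_le_iff_le_add']
  exact (sval_le_norm_sub A hD).trans (norm_sub_le_norm_sub_add_norm_sub A B D)

theorem sval_add_le_of_rank_le {M : Matrix m n ℝ} {r : ℕ} (hM : M.rank ≤ r) (N : Matrix m n ℝ)
    {j : ℕ} (hj : 0 < j) : sval (M + N) (r + j) ≤ sval N j := by
  rw [← one_mul (sval N j)]
  refine le_mul_sval hj zero_le_one fun B hB ↦ ?_
  have hrank : (M + B).rank < r + j := (rank_add_le M B).trans_lt (add_lt_add_of_le_of_lt hM hB)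
  simpa using sval_le_norm_sub (M + N) hrank

theorem sval_submatrix_le (A : Matrix m n ℝ) {f : p → m} {g : q → n}
    (hf : f.Injective) (hg : g.Injective) {j : ℕ} (hj : 0 < j) :
    sval (A.submatrix f g) j ≤ sval A j := by
  classical
  grw [submatrix_eq_mul_mul, sval_mul_mul_le _ _ _ hj, norm_one_submatrix_le hf,
    norm_one_submatrix_id_le hg, one_mul, one_mul]
  all_goals exact sval_nonneg A j

theorem one_le_norm_inv_mul_sval {A : Matrix n n ℝ} (hA : IsUnit A) {j : ℕ} (hj : 0 < j)
    (hjn : j ≤ Fintype.card n) : 1 ≤ ‖A⁻¹‖ * sval A j :=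
  le_mul_sval hj (norm_nonneg _) fun _ hB ↦ one_le_norm_inv_mul_norm_sub hA fun h ↦
    (hB.trans_le hjn).ne (rank_of_isUnit _ h)

theorem sval_le_mul_sval_of_isUnit_submatrix (A : Matrix m n ℝ)
    {B : Matrix m n ℝ} {f : q → m} {g : q → n} (hf : f.Injective) (hg : g.Injective)
    (hB : IsUnit (B.submatrix f g)) {j : ℕ} (hj : 0 < j) (hjq : j ≤ Fintype.card q) :
    sval A j ≤ (1 + ‖(B.submatrix f g)⁻¹‖ * ‖A - B‖) * sval B j := by
  classical
  have hone : 1 ≤ ‖(B.submatrix f g)⁻¹‖ * sval B j := by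
    grw [one_le_norm_inv_mul_sval hB hj hjq, sval_submatrix_le B hf hg hj]
  calc sval A j ≤ sval B j + 1 * ‖A - B‖ := by simpa using sval_le_sval_add_norm_sub A B hj
    _ ≤ sval B j + ‖(B.submatrix f g)⁻¹‖ * sval B j * ‖A - B‖ := by gcongr
    _ = _ := by ring

end Sval

section SchurComplement

variable {R s p q : Type*} [CommRing R] [Fintype s] [DecidableEq s]

/-- The Schur complement of the leading square block of `A`. -/
noncomputable def schurComplement (A : Matrix (s ⊕ p) (s ⊕ q) R) : Matrix p q R :=
  A.toBlocks₂₂ - A.toBlocks₂₁ * A.toBlocks₁₁⁻¹ * A.toBlocks₁₂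

/-- The approximant of `A` given by the partial LU factorization that eliminates the leading square
block of `A`. -/
noncomputable def luApprox (A : Matrix (s ⊕ p) (s ⊕ q) R) : Matrix (s ⊕ p) (s ⊕ q) R :=
  fromBlocks A.toBlocks₁₁ A.toBlocks₁₂ A.toBlocks₂₁ (A.toBlocks₂₁ * A.toBlocks₁₁⁻¹ * A.toBlocks₁₂)

/-- The row operations that eliminate the block below the leading block of `A`
(see `schurLeft_mul`). -/
noncomputable def schurLeft [DecidableEq p] (A : Matrix (s ⊕ p) (s ⊕ q) R) : Matrix p (s ⊕ p) R :=
  fromCols (-(A.toBlocks₂₁ * A.toBlocks₁₁⁻¹)) 1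

/-- The column operations that eliminate the block to the right of the leading block of `A`
(see `mul_schurRight`). -/
noncomputable def schurRight [DecidableEq q] (A : Matrix (s ⊕ p) (s ⊕ q) R) : Matrix (s ⊕ q) q R :=
  fromRows (-(A.toBlocks₁₁⁻¹ * A.toBlocks₁₂)) 1

theorem sub_luApprox (A : Matrix (s ⊕ p) (s ⊕ q) R) :
    A - luApprox A = fromBlocks 0 0 0 (schurComplement A) := by
  conv_lhs => rw [← fromBlocks_toBlocks A]
  rw [luApprox, sub_eq_add_neg, fromBlocks_neg, fromBlocks_add]
  simp [schurComplement, sub_eq_add_neg]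

theorem schurLeft_mul [Fintype p] [DecidableEq p] {A : Matrix (s ⊕ p) (s ⊕ q) R}
    (hA : IsUnit A.toBlocks₁₁) : schurLeft A * A = fromCols 0 (schurComplement A) := by
  have hinv := nonsing_inv_mul _ (A.toBlocks₁₁.isUnit_iff_isUnit_det.mp hA)
  conv_lhs => rw [schurLeft, ← fromBlocks_toBlocks A]
  simp [fromCols_mul_fromBlocks, schurComplement, Matrix.mul_assoc, hinv, neg_add_eq_sub]

theorem mul_schurRight [Fintype q] [DecidableEq q] {A : Matrix (s ⊕ p) (s ⊕ q) R}
    (hA : IsUnit A.toBlocks₁₁) : A * schurRight A = fromRows 0 (schurComplement A) := by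
  have hinv := mul_nonsing_inv _ (A.toBlocks₁₁.isUnit_iff_isUnit_det.mp hA)
  conv_lhs => rw [schurRight, ← fromBlocks_toBlocks A]
  simp [fromBlocks_mul_fromRows, schurComplement, ← Matrix.mul_assoc, hinv, neg_add_eq_sub]

variable [Fintype p] [Fintype q]

theorem schurComplement_sub_schurComplement [DecidableEq p] [DecidableEq q]
    {A B : Matrix (s ⊕ p) (s ⊕ q) R} (hA : IsUnit A.toBlocks₁₁) (hB : IsUnit B.toBlocks₁₁) :
    schurComplement A - schurComplement B = schurLeft B * (A - B) * schurRight A := by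
  rw [Matrix.mul_sub, Matrix.sub_mul, Matrix.mul_assoc, mul_schurRight hA, schurLeft_mul hB,
    schurLeft, schurRight, fromCols_mul_fromRows, fromCols_mul_fromRows]
  simp

theorem schurLeft_eq_add [DecidableEq p] {A B : Matrix (s ⊕ p) (s ⊕ q) R}
    (hA : IsUnit A.toBlocks₁₁) (hB : IsUnit B.toBlocks₁₁) :
    schurLeft B = schurLeft A +
      schurLeft B * (A - B) * (fromBlocks A.toBlocks₁₁⁻¹ 0 0 0 : Matrix (s ⊕ q) (s ⊕ p) R) := by
  have hinv := mul_nonsing_inv _ (A.toBlocks₁₁.isUnit_iff_isUnit_det.mp hA)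
  have hmul : schurLeft B * A = fromCols
      (A.toBlocks₂₁ - B.toBlocks₂₁ * B.toBlocks₁₁⁻¹ * A.toBlocks₁₁)
      (A.toBlocks₂₂ - B.toBlocks₂₁ * B.toBlocks₁₁⁻¹ * A.toBlocks₁₂) := by
    conv_lhs => rw [schurLeft, ← fromBlocks_toBlocks A]
    simp [fromCols_mul_fromBlocks, neg_add_eq_sub]
  rw [Matrix.mul_sub, hmul, schurLeft_mul hB, Matrix.sub_mul, fromCols_mul_fromBlocks,
    fromCols_mul_fromBlocks, schurLeft, schurLeft]
  ext i (j | j) <;> simp [Matrix.sub_mul, Matrix.mul_assoc, hinv, neg_add_eq_sub]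

end SchurComplement

section SchurRank

variable {R s p q : Type*} [Field R] [Fintype s] [DecidableEq s] [Fintype q]

theorem card_add_rank_schurComplement_le [Finite p]
    {A : Matrix (s ⊕ p) (s ⊕ q) R} (hA : IsUnit A.toBlocks₁₁) :
    Fintype.card s + (schurComplement A).rank ≤ A.rank := by
  classical
  have := Fintype.ofFinite p
  let restrict : (s ⊕ q → R) →ₗ[R] q → R := LinearMap.funLeft R R Sum.inr
  have hmaps : ∀ x ∈ A.mulVecLin.ker, restrict x ∈ (schurComplement A).mulVecLin.ker := by
    intro x hx
    have hzero : (schurLeft A * A) *ᵥ x = 0 := by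
      rw [← mulVec_mulVec, show A *ᵥ x = 0 from hx, mulVec_zero]
    rwa [schurLeft_mul hA, fromCols_mulVec, zero_mulVec, zero_add] at hzero
  have hinj : Function.Injective (restrict.restrict hmaps) := by
    rw [← LinearMap.ker_eq_bot, LinearMap.ker_eq_bot']
    rintro ⟨x, hx⟩ hx₂
    have hinr : x ∘ Sum.inr = 0 := congrArg Subtype.val hx₂
    have hinl : A.toBlocks₁₁ *ᵥ (x ∘ Sum.inl) = 0 := by
      rw [LinearMap.mem_ker, mulVecLin_apply, ← fromBlocks_toBlocks A, fromBlocks_mulVec, hinr,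
        mulVec_zero, add_zero] at hx
      exact congrArg (· ∘ Sum.inl) hx
    rw [← mulVec_zero A.toBlocks₁₁] at hinl
    exact Subtype.ext (funext (Sum.rec
      (congrFun (mulVec_injective_of_isUnit hA hinl)) (congrFun hinr)))
  have hker := LinearMap.finrank_le_finrank_of_injective hinj
  have hrankA := A.mulVecLin.finrank_range_add_finrank_ker
  have hrankS := (schurComplement A).mulVecLin.finrank_range_add_finrank_ker
  simp only [Module.finrank_fintype_fun_eq_card, Fintype.card_sum] at hrankA hrankS
  rw [rank, rank]
  omega

theorem rank_luApprox_le {A : Matrix (s ⊕ p) (s ⊕ q) R} (hA : IsUnit A.toBlocks₁₁) :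
    (luApprox A).rank ≤ Fintype.card s := by
  have hfactor : luApprox A = fromRows 1 (A.toBlocks₂₁ * A.toBlocks₁₁⁻¹) *
      fromCols A.toBlocks₁₁ A.toBlocks₁₂ := by
    have hinv := nonsing_inv_mul _ (A.toBlocks₁₁.isUnit_iff_isUnit_det.mp hA)
    rw [fromRows_mul_fromCols]
    simp [luApprox, Matrix.mul_assoc, hinv]
  rw [hfactor]
  exact (rank_mul_le_left _ _).trans (rank_le_card_width _)

end SchurRank

section SchurNorm

open scoped Matrix.Norms.L2Operator

variable {𝕜 R s p q : Type*} [RCLike 𝕜] [CommRing R] [Fintype s] [DecidableEq s] [Fintype p]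
  [Fintype q] [DecidableEq q]

theorem sub_luApprox_eq_mul_mul [DecidableEq p] (A : Matrix (s ⊕ p) (s ⊕ q) R) :
    A - luApprox A = (1 : Matrix (s ⊕ p) (s ⊕ p) R).submatrix id Sum.inr * schurComplement A *
      (1 : Matrix (s ⊕ q) (s ⊕ q) R).submatrix Sum.inr id := by
  rw [sub_luApprox]
  ext (i | i) (j | j) <;> simp [mul_apply, one_apply]

theorem norm_sub_luApprox_le (A : Matrix (s ⊕ p) (s ⊕ q) 𝕜) :
    ‖A - luApprox A‖ ≤ ‖schurComplement A‖ := by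
  classical
  grw [sub_luApprox_eq_mul_mul, l2_opNorm_mul, l2_opNorm_mul,
    norm_one_submatrix_id_le Sum.inr_injective, norm_one_submatrix_le Sum.inr_injective, one_mul,
    mul_one]

theorem sval_sub_luApprox_le (A : Matrix (s ⊕ p) (s ⊕ q) ℝ) {j : ℕ} (hj : 0 < j) :
    sval (A - luApprox A) j ≤ sval (schurComplement A) j := by
  classical
  grw [sub_luApprox_eq_mul_mul, sval_mul_mul_le _ _ _ hj,
    norm_one_submatrix_id_le Sum.inr_injective, norm_one_submatrix_le Sum.inr_injective, one_mul,
    one_mul]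
  all_goals exact sval_nonneg _ j

theorem sval_add_le_sval_sub_luApprox {A : Matrix (s ⊕ p) (s ⊕ q) ℝ}
    (hA : IsUnit A.toBlocks₁₁) {j : ℕ} (hj : 0 < j) :
    sval A (Fintype.card s + j) ≤ sval (A - luApprox A) j := by
  simpa using sval_add_le_of_rank_le (rank_luApprox_le hA) (A - luApprox A) hj

theorem norm_schurLeft_mul_le [DecidableEq p] {A B : Matrix (s ⊕ p) (s ⊕ q) 𝕜}
    (hA : IsUnit A.toBlocks₁₁) (hB : IsUnit B.toBlocks₁₁) :
    ‖schurLeft B‖ * (1 - ‖A.toBlocks₁₁⁻¹‖ * ‖A - B‖) ≤ ‖schurLeft A‖ := by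
  have hperturb : ‖schurLeft B‖ ≤
      ‖schurLeft A‖ + ‖schurLeft B‖ * ‖A - B‖ * ‖A.toBlocks₁₁⁻¹‖ := by
    conv_lhs => rw [schurLeft_eq_add hA hB]
    grw [norm_add_le, l2_opNorm_mul, l2_opNorm_mul, norm_fromBlocks_zero_le]
  linarith

theorem sval_schurComplement_le [DecidableEq p] {A : Matrix (s ⊕ p) (s ⊕ q) ℝ}
    (hA : IsUnit A.toBlocks₁₁) {j : ℕ} (hj : 0 < j) :
    sval (schurComplement A) j ≤
      (‖schurLeft A‖ * ‖schurRight A‖ + ‖A.toBlocks₁₁⁻¹‖ * ‖schurComplement A‖) *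
        sval A (Fintype.card s + j) := by
  refine le_mul_sval (Nat.add_pos_right _ hj) (by positivity) fun B hB ↦ ?_
  set t := ‖A.toBlocks₁₁⁻¹‖ * ‖A - B‖ with ht
  have hnorm : sval (schurComplement A) j ≤ ‖schurComplement A‖ := sval_le_norm _ hj
  rcases le_or_gt 1 t with h1t | ht1
  · calc _ ≤ t * ‖schurComplement A‖ := hnorm.trans (le_mul_of_one_le_left (norm_nonneg _) h1t)
      _ ≤ ‖schurLeft A‖ * ‖schurRight A‖ * ‖A - B‖ + t * ‖schurComplement A‖ :=
        le_add_of_nonneg_left (by positivity)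
      _ = _ := by rw [ht]; ring
  have hBunit : IsUnit B.toBlocks₁₁ := by
    by_contra hsing
    have hblock : ‖A.toBlocks₁₁ - B.toBlocks₁₁‖ ≤ ‖A - B‖ :=
      norm_submatrix_le (A - B) Sum.inl_injective Sum.inl_injective
    exact ht1.not_ge ((one_le_norm_inv_mul_norm_sub hA hsing).trans
      (mul_le_mul_of_nonneg_left hblock (norm_nonneg _)))
  have hrank : (schurComplement B).rank < j := by
    have := card_add_rank_schurComplement_le hBunit
    omega
  have hdiff : sval (schurComplement A) j ≤ ‖schurLeft B‖ * ‖A - B‖ * ‖schurRight A‖ := by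
    grw [sval_le_norm_sub _ hrank, schurComplement_sub_schurComplement hA hBunit, l2_opNorm_mul,
      l2_opNorm_mul]
  calc sval (schurComplement A) j
      = sval (schurComplement A) j * (1 - t) + t * sval (schurComplement A) j := by ring
    _ ≤ ‖schurLeft B‖ * ‖A - B‖ * ‖schurRight A‖ * (1 - t) + t * ‖schurComplement A‖ := by gcongr
    _ = ‖schurLeft B‖ * (1 - t) * ‖schurRight A‖ * ‖A - B‖ + t * ‖schurComplement A‖ := by ring
    _ ≤ ‖schurLeft A‖ * ‖schurRight A‖ * ‖A - B‖ + t * ‖schurComplement A‖ := by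
      grw [norm_schurLeft_mul_le hA hBunit]
    _ = _ := by rw [ht]; ring

end SchurNorm

section Exchange

variable {R s p q : Type*} [DecidableEq s]

theorem submatrix_inl_update_inr (A : Matrix (s ⊕ p) (s ⊕ q) R) (b : s) (j : q) :
    A.submatrix Sum.inl (Function.update Sum.inl b (Sum.inr j)) =
      A.toBlocks₁₁.updateCol b (A.toBlocks₁₂.col j) := by
  ext i k
  rcases eq_or_ne k b with rfl | hk <;> simp [toBlocks₁₁, toBlocks₁₂, *]

theorem submatrix_update_inr_inl (A : Matrix (s ⊕ p) (s ⊕ q) R) (a : s) (i : p) :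
    A.submatrix (Function.update Sum.inl a (Sum.inr i)) Sum.inl =
      A.toBlocks₁₁.updateRow a (A.toBlocks₂₁.row i) := by
  ext k j
  rcases eq_or_ne k a with rfl | hk <;> simp [toBlocks₁₁, toBlocks₂₁, *]

end Exchange

section Determinants

variable {R s p q : Type*} [CommRing R] [Fintype s] [DecidableEq s]

theorem det_updateCol_eq_mul {A : Matrix s s R} (hA : IsUnit A) (b : s) (v : s → R) :
    (A.updateCol b v).det = A.det * (A⁻¹ *ᵥ v) b := by
  rw [← cramer_apply, ← det_smul_inv_mulVec_eq_cramer A v (A.isUnit_iff_isUnit_det.mp hA),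
    Pi.smul_apply, smul_eq_mul]

theorem det_updateRow_eq_mul {A : Matrix s s R} (hA : IsUnit A) (a : s) (v : s → R) :
    (A.updateRow a v).det = A.det * (v ᵥ* A⁻¹) a := by
  rw [← cramer_transpose_apply,
    ← det_smul_inv_vecMul_eq_cramer_transpose A v (A.isUnit_iff_isUnit_det.mp hA),
    Pi.smul_apply, smul_eq_mul]

theorem det_updateRow_vecMul (A : Matrix s s R) (a : s) (x : s → R) :
    (A.updateRow a (x ᵥ* A)).det = x a * A.det := by
  rw [vecMul_eq_sum, det_updateRow_sum, smul_eq_mul]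

theorem det_updateRow_single_updateCol (A : Matrix s s R) (a b : s) (v : s → R) :
    ((A.updateCol b v).updateRow a (Pi.single b 1)).det = (A.updateRow a (Pi.single b 1)).det := by
  rw [← adjugate_apply, ← adjugate_apply, ← transpose_apply (adjugate _),
    ← transpose_apply A.adjugate, adjugate_transpose, adjugate_transpose, adjugate_apply,
    adjugate_apply, ← updateRow_transpose, updateRow_idem]

theorem det_submatrix_inl_update_inr {A : Matrix (s ⊕ p) (s ⊕ q) R} (hA : IsUnit A.toBlocks₁₁)
    (b : s) (j : q) :
    (A.submatrix Sum.inl (Function.update Sum.inl b (Sum.inr j))).det =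
      A.toBlocks₁₁.det * (A.toBlocks₁₁⁻¹ * A.toBlocks₁₂) b j := by
  rw [submatrix_inl_update_inr, det_updateCol_eq_mul hA]
  rfl

theorem det_submatrix_update_inr_inl {A : Matrix (s ⊕ p) (s ⊕ q) R} (hA : IsUnit A.toBlocks₁₁)
    (a : s) (i : p) :
    (A.submatrix (Function.update Sum.inl a (Sum.inr i)) Sum.inl).det =
      A.toBlocks₁₁.det * (A.toBlocks₂₁ * A.toBlocks₁₁⁻¹) i a := by
  rw [submatrix_update_inr_inl, det_updateRow_eq_mul hA]
  rfl

-- Subtracting the combination `x` of the rows of `N` from the exchanged row leaves only the entry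
-- of the Schur complement.
theorem submatrix_update_inr_update_inr {A : Matrix (s ⊕ p) (s ⊕ q) R} (hA : IsUnit A.toBlocks₁₁)
    (a b : s) (i : p) (j : q) :
    let N := A.toBlocks₁₁.updateCol b (A.toBlocks₁₂.col j)
    let x := (A.toBlocks₂₁ * A.toBlocks₁₁⁻¹).row i
    A.submatrix (Function.update Sum.inl a (Sum.inr i)) (Function.update Sum.inl b (Sum.inr j)) =
      N.updateRow a (x ᵥ* N + schurComplement A i j • Pi.single b 1) := by
  intro N x
  have hinv := nonsing_inv_mul _ (A.toBlocks₁₁.isUnit_iff_isUnit_det.mp hA)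
  have hx : x ᵥ* A.toBlocks₁₁ = A.toBlocks₂₁.row i := by
    rw [show x = A.toBlocks₂₁.row i ᵥ* A.toBlocks₁₁⁻¹ from rfl, vecMul_vecMul, hinv, vecMul_one]
  ext k l
  rcases eq_or_ne k a with rfl | hk
  · rcases eq_or_ne l b with rfl | hl
    · have hN : (x ᵥ* N) l = (A.toBlocks₂₁ * A.toBlocks₁₁⁻¹ * A.toBlocks₁₂) i j := by
        simp [x, N, vecMul, dotProduct, mul_apply]
      simp [hN, schurComplement, toBlocks₂₂]
    · have hN : (x ᵥ* N) l = (x ᵥ* A.toBlocks₁₁) l := by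
        simp [N, vecMul, dotProduct, hl]
      simp [hN, hx, hl, toBlocks₂₁]
  · calc _ = A.submatrix Sum.inl (Function.update Sum.inl b (Sum.inr j)) k l := by simp [hk]
      _ = _ := by rw [submatrix_inl_update_inr, updateRow_ne hk]

theorem det_submatrix_update_inr_update_inr {A : Matrix (s ⊕ p) (s ⊕ q) R}
    (hA : IsUnit A.toBlocks₁₁) (a b : s) (i : p) (j : q) :
    (A.submatrix (Function.update Sum.inl a (Sum.inr i))
      (Function.update Sum.inl b (Sum.inr j))).det =
      A.toBlocks₁₁.det * ((A.toBlocks₂₁ * A.toBlocks₁₁⁻¹) i a *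
        (A.toBlocks₁₁⁻¹ * A.toBlocks₁₂) b j + schurComplement A i j * A.toBlocks₁₁⁻¹ b a) := by
  rw [submatrix_update_inr_update_inr hA, det_updateRow_add, det_updateRow_smul,
    det_updateRow_vecMul, det_updateRow_single_updateCol, det_updateRow_eq_mul hA,
    single_one_vecMul, ← submatrix_inl_update_inr, det_submatrix_inl_update_inr hA, row_apply,
    row_apply]
  ring

end Determinants

section DiffOne

variable {ι α : Type*} [Fintype ι] [DecidableEq α] {b : ι → α}

theorem diffOne_self (hb : b.Injective) : DiffOne b b :=
  ⟨hb, by simp⟩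

theorem diffOne_update [DecidableEq ι] (hb : b.Injective) (a : ι) {x : α} (hx : x ∉ Set.range b) :
    DiffOne b (Function.update b a x) := by
  refine ⟨fun c d hcd ↦ ?_, (Finset.card_le_card (t := {x}) fun y hy ↦ ?_).trans (by simp)⟩
  · rw [Function.update_apply, Function.update_apply] at hcd
    split_ifs at hcd with hc hd hd
    · exact hc.trans hd.symm
    · exact (hx ⟨d, hcd.symm⟩).elim
    · exact (hx ⟨c, hcd⟩).elim
    · exact hb hcd
  · simp only [Finset.mem_sdiff, Finset.mem_image, Finset.mem_univ, true_and] at hy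
    obtain ⟨⟨c, rfl⟩, hy⟩ := hy
    rcases eq_or_ne c a with rfl | hc
    · simp
    · exact (hy ⟨c, by simp [hc]⟩).elim

end DiffOne

theorem one_add_mul_mul_one_add_mul_le_sq {γ : ℝ} (hγ : 1 ≤ γ) (k p q : ℕ) :
    (1 + γ ^ 2 * k * p) * (1 + γ ^ 2 * k * q) ≤
      (1 + γ ^ 2 * k * √((k + p) * (k + q))) ^ 2 := by
  set a := γ ^ 2 * k with ha
  have hk : (k : ℝ) ≤ k ^ 3 := by exact_mod_cast Nat.le_self_pow three_ne_zero k
  have haa : a ≤ a ^ 2 * k := by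
    have := pow_le_pow_right₀ hγ (show 2 ≤ 4 by simp)
    calc γ ^ 2 * k ≤ γ ^ 4 * k ^ 3 := by gcongr
      _ = a ^ 2 * k := by rw [ha]; ring
  calc (1 + a * p) * (1 + a * q) = 1 + a * (p + q) + a ^ 2 * (p * q) := by ring
    _ ≤ 1 + a ^ 2 * k * (p + q) + a ^ 2 * (p * q + k ^ 2) := by
      gcongr
      exact le_add_of_nonneg_right (sq_nonneg _)
    _ = 1 + a ^ 2 * ((k + p) * (k + q)) := by ring
    _ = 1 + (a * √((k + p) * (k + q))) ^ 2 := by rw [mul_pow a, Real.sq_sqrt (by positivity)]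
    _ ≤ (1 + a * √((k + p) * (k + q))) ^ 2 := by
      have : 0 ≤ a * √((k + p) * (k + q)) := by positivity
      linarith [add_sq 1 (a * √((k + p) * (k + q)))]

section LocalMaxVol

open scoped Matrix.Norms.L2Operator

variable {s p q : Type*} [Fintype s] [DecidableEq s] [DecidableEq p] [DecidableEq q] {γ : ℝ}
  {A : Matrix (s ⊕ p) (s ⊕ q) ℝ}

/-- The leading block of `A` is a `γ`-local maximum volume submatrix of `A`. The competing
submatrices are given by selections of rows and columns, so that they occur with all orderings of
their rows and columns; this leaves the volume unchanged. -/
structure IsLocalMaxVol (γ : ℝ) (A : Matrix (s ⊕ p) (s ⊕ q) ℝ) : Prop where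
  pos : 0 < vol A.toBlocks₁₁
  le : ∀ (r : s → s ⊕ p) (c : s → s ⊕ q), DiffOne Sum.inl r → DiffOne Sum.inl c →
    vol (A.submatrix r c) ≤ γ * vol A.toBlocks₁₁

namespace IsLocalMaxVol

theorem isUnit (h : IsLocalMaxVol γ A) : IsUnit A.toBlocks₁₁ := by
  rw [isUnit_iff_isUnit_det, isUnit_iff_ne_zero, ← abs_pos, ← vol_eq_abs_det]
  exact h.pos

theorem abs_le_of_det_submatrix_eq_mul (h : IsLocalMaxVol γ A) {r : s → s ⊕ p} {c : s → s ⊕ q}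
    (hr : DiffOne Sum.inl r) (hc : DiffOne Sum.inl c) {t : ℝ}
    (ht : (A.submatrix r c).det = A.toBlocks₁₁.det * t) : |t| ≤ γ := by
  have hle := h.le r c hr hc
  rw [vol_eq_abs_det, ht, abs_mul, ← vol_eq_abs_det, mul_comm] at hle
  exact le_of_mul_le_mul_right hle h.pos

theorem one_le (h : IsLocalMaxVol γ A) : 1 ≤ γ := by
  rw [← abs_one]
  exact h.abs_le_of_det_submatrix_eq_mul (diffOne_self Sum.inl_injective)
    (diffOne_self Sum.inl_injective) (mul_one _).symm

theorem abs_inv_mul_apply_le (h : IsLocalMaxVol γ A) (b : s) (j : q) :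
    |(A.toBlocks₁₁⁻¹ * A.toBlocks₁₂) b j| ≤ γ :=
  h.abs_le_of_det_submatrix_eq_mul (diffOne_self Sum.inl_injective)
    (diffOne_update Sum.inl_injective b (by simp)) (det_submatrix_inl_update_inr h.isUnit b j)

theorem abs_mul_inv_apply_le (h : IsLocalMaxVol γ A) (i : p) (a : s) :
    |(A.toBlocks₂₁ * A.toBlocks₁₁⁻¹) i a| ≤ γ :=
  h.abs_le_of_det_submatrix_eq_mul (diffOne_update Sum.inl_injective a (by simp))
    (diffOne_self Sum.inl_injective) (det_submatrix_update_inr_inl h.isUnit a i)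

theorem abs_inv_apply_mul_schurComplement_apply_le (h : IsLocalMaxVol γ A) (b a : s) (i : p)
    (j : q) : |A.toBlocks₁₁⁻¹ b a * schurComplement A i j| ≤ 2 * γ ^ 2 := by
  set x := (A.toBlocks₂₁ * A.toBlocks₁₁⁻¹) i a
  set y := (A.toBlocks₁₁⁻¹ * A.toBlocks₁₂) b j
  have hswap : |x * y + schurComplement A i j * A.toBlocks₁₁⁻¹ b a| ≤ γ :=
    h.abs_le_of_det_submatrix_eq_mul (diffOne_update Sum.inl_injective a (by simp))
      (diffOne_update Sum.inl_injective b (by simp))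
      (det_submatrix_update_inr_update_inr h.isUnit a b i j)
  have hγ := h.one_le
  calc |A.toBlocks₁₁⁻¹ b a * schurComplement A i j|
      = |x * y + schurComplement A i j * A.toBlocks₁₁⁻¹ b a - x * y| := by ring_nf
    _ ≤ γ + γ * γ := by
      grw [abs_sub, hswap, abs_mul, h.abs_mul_inv_apply_le i a, h.abs_inv_mul_apply_le b j]
    _ ≤ 2 * γ ^ 2 := by nlinarith

theorem norm_inv_mul_norm_schurComplement_le [Fintype p] [Fintype q] (h : IsLocalMaxVol γ A) :
    ‖A.toBlocks₁₁⁻¹‖ * ‖schurComplement A‖ ≤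
      2 * (γ ^ 2 * Fintype.card s *
        √((Fintype.card s + Fintype.card p) * (Fintype.card s + Fintype.card q))) := by
  have hsqrt : √(Fintype.card p * Fintype.card q : ℝ) ≤
      √((Fintype.card s + Fintype.card p) * (Fintype.card s + Fintype.card q)) := by
    gcongr <;> simp
  have hbound := norm_mul_norm_le_of_norm_mul_le (M := A.toBlocks₁₁⁻¹) (N := schurComplement A)
    (by positivity) fun b a i j ↦ h.abs_inv_apply_mul_schurComplement_apply_le b a i j
  rw [Real.sqrt_mul_self (Nat.cast_nonneg _)] at hbound
  grw [hbound, hsqrt]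
  exact le_of_eq (by ring)

theorem norm_schurLeft_sq_le [Fintype p] (h : IsLocalMaxVol γ A) :
    ‖schurLeft A‖ ^ 2 ≤ 1 + γ ^ 2 * Fintype.card s * Fintype.card p := by
  have hX : ‖-(A.toBlocks₂₁ * A.toBlocks₁₁⁻¹)‖ ≤ √(Fintype.card p * Fintype.card s) * γ :=
    norm_le_sqrt_card_mul (zero_le_one.trans h.one_le) fun i a ↦ by
      simpa using h.abs_mul_inv_apply_le i a
  grw [schurLeft, norm_fromCols_sq_le, hX, norm_one_le, mul_pow, Real.sq_sqrt (by positivity)]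
  exact le_of_eq (by ring)

theorem norm_schurRight_sq_le [Fintype q] (h : IsLocalMaxVol γ A) :
    ‖schurRight A‖ ^ 2 ≤ 1 + γ ^ 2 * Fintype.card s * Fintype.card q := by
  have hY : ‖-(A.toBlocks₁₁⁻¹ * A.toBlocks₁₂)‖ ≤ √(Fintype.card s * Fintype.card q) * γ :=
    norm_le_sqrt_card_mul (zero_le_one.trans h.one_le) fun b j ↦ by
      simpa using h.abs_inv_mul_apply_le b j
  grw [schurRight, norm_fromRows_sq_le, hY, norm_one_le, mul_pow, Real.sq_sqrt (by positivity)]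
  exact le_of_eq (by ring)

theorem one_add_norm_inv_mul_norm_sub_luApprox_le [Fintype p] [Fintype q] (h : IsLocalMaxVol γ A) :
    1 + ‖A.toBlocks₁₁⁻¹‖ * ‖A - luApprox A‖ ≤
      1 + 3 * γ ^ 2 * Fintype.card s *
        √((Fintype.card s + Fintype.card p) * (Fintype.card s + Fintype.card q)) := by
  grw [norm_sub_luApprox_le, h.norm_inv_mul_norm_schurComplement_le]
  have : 0 ≤ γ ^ 2 * Fintype.card s *
      √((Fintype.card s + Fintype.card p) * (Fintype.card s + Fintype.card q)) := by positivity
  linarith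

theorem norm_schurLeft_mul_norm_schurRight_le [Fintype p] [Fintype q] (h : IsLocalMaxVol γ A) :
    ‖schurLeft A‖ * ‖schurRight A‖ ≤ 1 + γ ^ 2 * Fintype.card s *
      √((Fintype.card s + Fintype.card p) * (Fintype.card s + Fintype.card q)) := by
  refine (sq_le_sq₀ (by positivity) (by positivity)).mp ?_
  grw [mul_pow, h.norm_schurLeft_sq_le, h.norm_schurRight_sq_le,
    one_add_mul_mul_one_add_mul_le_sq h.one_le]

theorem sval_le_mul_sval_luApprox [Fintype p] [Fintype q] (h : IsLocalMaxVol γ A) {j : ℕ}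
    (hj : 0 < j) (hjs : j ≤ Fintype.card s) :
    sval A j ≤ (1 + 3 * γ ^ 2 * Fintype.card s *
      √((Fintype.card s + Fintype.card p) * (Fintype.card s + Fintype.card q))) *
        sval (luApprox A) j := by
  grw [← h.one_add_norm_inv_mul_norm_sub_luApprox_le]
  · exact sval_le_mul_sval_of_isUnit_submatrix A (B := luApprox A) Sum.inl_injective
      Sum.inl_injective h.isUnit hj hjs
  · exact sval_nonneg _ j

theorem sval_luApprox_le_mul_sval [Fintype p] [Fintype q] (h : IsLocalMaxVol γ A) {j : ℕ}
    (hj : 0 < j) (hjs : j ≤ Fintype.card s) :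
    sval (luApprox A) j ≤ (1 + 3 * γ ^ 2 * Fintype.card s *
      √((Fintype.card s + Fintype.card p) * (Fintype.card s + Fintype.card q))) * sval A j := by
  grw [← h.one_add_norm_inv_mul_norm_sub_luApprox_le, norm_sub_rev]
  · exact sval_le_mul_sval_of_isUnit_submatrix (luApprox A) Sum.inl_injective
      Sum.inl_injective h.isUnit hj hjs
  · exact sval_nonneg _ j

theorem sval_sub_luApprox_le_mul_sval [Fintype p] [Fintype q] (h : IsLocalMaxVol γ A) {j : ℕ}
    (hj : 0 < j) :
    sval (A - luApprox A) j ≤ (1 + 3 * γ ^ 2 * Fintype.card s *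
      √((Fintype.card s + Fintype.card p) * (Fintype.card s + Fintype.card q))) *
        sval A (Fintype.card s + j) := by
  grw [sval_sub_luApprox_le A hj, sval_schurComplement_le h.isUnit hj,
    h.norm_schurLeft_mul_norm_schurRight_le, h.norm_inv_mul_norm_schurComplement_le]
  · exact le_of_eq (by ring)
  all_goals exact sval_nonneg _ _

end IsLocalMaxVol

end LocalMaxVol

theorem statement_9_general {s p q : Type*} [Fintype s] [Fintype p] [Fintype q] [DecidableEq s]
    [DecidableEq p] [DecidableEq q] {γ : ℝ} {A : Matrix (s ⊕ p) (s ⊕ q) ℝ}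
    (h : IsLocalMaxVol γ A) {C : ℝ}
    (hC : 1 + 3 * γ ^ 2 * Fintype.card s *
      √((Fintype.card s + Fintype.card p) * (Fintype.card s + Fintype.card q)) ≤ C) :
    ((∀ i j, |(A.toBlocks₁₁⁻¹ * A.toBlocks₁₂) i j| ≤ γ) ∧
      ∀ i j, |(A.toBlocks₂₁ * A.toBlocks₁₁⁻¹) i j| ≤ γ) ∧
    (∀ j, 1 ≤ j → j ≤ Fintype.card s →
      1 / C * sval A j ≤ sval (luApprox A) j ∧ sval (luApprox A) j ≤ C * sval A j) ∧
    ∀ j, 1 ≤ j →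
      sval A (Fintype.card s + j) ≤ sval (A - luApprox A) j ∧
      sval (A - luApprox A) j ≤ C * sval A (Fintype.card s + j) := by
  have hC0 : 0 < C := lt_of_lt_of_le (by positivity) hC
  refine ⟨⟨h.abs_inv_mul_apply_le, h.abs_mul_inv_apply_le⟩, fun j hj hjs ↦ ⟨?_, ?_⟩,
    fun j hj ↦ ⟨sval_add_le_sval_sub_luApprox h.isUnit hj, ?_⟩⟩
  · rw [one_div, inv_mul_le_iff₀ hC0]
    exact (h.sval_le_mul_sval_luApprox hj hjs).trans
      (mul_le_mul_of_nonneg_right hC (sval_nonneg _ j))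
  · exact (h.sval_luApprox_le_mul_sval hj hjs).trans
      (mul_le_mul_of_nonneg_right hC (sval_nonneg _ j))
  · exact (h.sval_sub_luApprox_le_mul_sval hj).trans
      (mul_le_mul_of_nonneg_right hC (sval_nonneg _ _))

theorem statement_9 {k m' n' : ℕ} (γ : ℝ) (hγ : 1 ≤ γ)
    (A11 : Matrix (Fin k) (Fin k) ℝ) (A12 : Matrix (Fin k) (Fin n') ℝ)
    (A21 : Matrix (Fin m') (Fin k) ℝ) (A22 : Matrix (Fin m') (Fin n') ℝ)
    (hpos : 0 < vol A11)
    (hmax : ∀ (r : Fin k → Fin k ⊕ Fin m') (c : Fin k → Fin k ⊕ Fin n'),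
      DiffOne Sum.inl r → DiffOne Sum.inl c →
      vol ((Matrix.fromBlocks A11 A12 A21 A22).submatrix r c) ≤ γ * vol A11) :
    ((∀ i j, |(A11⁻¹ * A12) i j| ≤ γ) ∧ (∀ i j, |(A21 * A11⁻¹) i j| ≤ γ)) ∧
    (∀ j : ℕ, 1 ≤ j → j ≤ k →
      (1 / (1 + 5 * γ ^ 2 * k * Real.sqrt ((k + m') * (k + n')))) *
          sval (Matrix.fromBlocks A11 A12 A21 A22) j ≤
        sval (Matrix.fromBlocks A11 A12 A21 (A21 * A11⁻¹ * A12)) j ∧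
      sval (Matrix.fromBlocks A11 A12 A21 (A21 * A11⁻¹ * A12)) j ≤
        (1 + 5 * γ ^ 2 * k * Real.sqrt ((k + m') * (k + n'))) *
          sval (Matrix.fromBlocks A11 A12 A21 A22) j) ∧
    (∀ j : ℕ, 1 ≤ j → j ≤ min (k + m') (k + n') - k →
      sval (Matrix.fromBlocks A11 A12 A21 A22) (k + j) ≤
        sval (Matrix.fromBlocks A11 A12 A21 A22
              - Matrix.fromBlocks A11 A12 A21 (A21 * A11⁻¹ * A12)) j ∧
      sval (Matrix.fromBlocks A11 A12 A21 A22
              - Matrix.fromBlocks A11 A12 A21 (A21 * A11⁻¹ * A12)) j ≤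
        (1 + 5 * γ ^ 2 * k * Real.sqrt ((k + m') * (k + n'))) *
          sval (Matrix.fromBlocks A11 A12 A21 A22) (k + j)) := by
  obtain ⟨ha, hb, hc⟩ := statement_9_general (A := fromBlocks A11 A12 A21 A22) ⟨hpos, hmax⟩
    (C := 1 + 5 * γ ^ 2 * k * √((k + m') * (k + n')))
    (by simp_rw [Fintype.card_fin]; gcongr; norm_num)
  exact ⟨ha, by simpa [luApprox] using hb, fun j hj _ ↦ by simpa [luApprox] using hc j hj⟩
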